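/- arXiv:2410.00045 — 10 statements merged into one kernel-verified Lean document; each statement's English description precedes it below -/
import Mathlib

section
/- Let k be a real number with k + 1 ≠ 0. Let ω ∈ M satisfy d ω = 0 and (d ∘ J + J ∘ d)(ω) = 0 (i.e. the Lie derivative L_{[Q,Q]} = [δ, ι_{[Q,Q]}] annihilates ω, the weak-BV condition), and suppose (d ∘ e + e ∘ d)(J ω) = (k+1) • J ω (i.e. J ω has ghost number k + 1). Then, setting H := e (J ω), one has d H = (k+1) • J ω; in particular J ω = d ((k+1)⁻¹ • H) lies in the image of d, i.e. [Q,Q] is Hamiltonian with Hamiltonian function (k+1)⁻¹ • H. (Paper: Lemma stating that on a weak BV manifold of degree k ≠ −1, [Q,Q] is Hamiltonian with respect to ω.) -/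
/-- On a weak BV manifold of degree `k ≠ -1`, the even vector field `[Q,Q]` is
Hamiltonian with respect to `ω`, with Hamiltonian function `(k+1)⁻¹ • H` where
`H := e (J ω)`.  Here `d` models the de Rham differential `δ`, `J` models the
contraction `ι_{[Q,Q]}`, and `e` models the contraction with the Euler vector
field, whose Lie derivative `d ∘ e + e ∘ d` multiplies an element of ghost
number `n` by `n`. -/
theorem weakBV_QQ_hamiltonian
    {M : Type*} [AddCommGroup M] [Module ℝ M]
    (d J e : M →ₗ[ℝ] M)
    (hdd : d ∘ₗ d = 0)
    (k : ℝ) (hk : k + 1 ≠ 0)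
    (ω : M)
    (hω : d ω = 0)
    (hweak : (d ∘ₗ J + J ∘ₗ d) ω = 0)
    (hgh : (d ∘ₗ e + e ∘ₗ d) (J ω) = (k + 1) • J ω) :
    d (e (J ω)) = (k + 1) • J ω ∧ J ω = d ((k + 1)⁻¹ • e (J ω)) := by
  have hdJ : d (J ω) = 0 := by simpa [hω] using hweak
  have hdH : d (e (J ω)) = (k + 1) • J ω := by simpa [hdJ] using hgh
  exact ⟨hdH, by rw [map_smul, hdH, inv_smul_smul₀ hk]⟩
end

section
/- Let k be a real number with k + 1 ≠ 0. Let ω, S ∈ M with d ω = 0 and (L ∘ L)(ω) = 0, and define ᾱ := i ω − d S and ω̄ := d ᾱ. Suppose (d ∘ e + e ∘ d)(i ω̄) = (k+1) • i ω̄ (i.e. ι_Q ω̄ has ghost number k + 1). Then S̄ := (k+1)⁻¹ • e (i ω̄) satisfies d S̄ = i ω̄. Moreover S̄ is unique in the following sense: if S̄' also satisfies d S̄' = i ω̄, e (S̄ − S̄') = 0, and (d ∘ e + e ∘ d)(S̄ − S̄') = (k+1) • (S̄ − S̄'), then S̄' = S̄. (Paper: Lemma on existence and uniqueness of the boundary term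 S̄ with ι_Q ω̄ = δ S̄ for k ≠ −1.) -/
/-- Existence and uniqueness of the boundary term `S̄` with `ι_Q ω̄ = δ S̄` for
`k ≠ -1`.  Here `d` models `δ`, `i` models `ι_Q`, `L := i ∘ d - d ∘ i` models
`L_Q`, and `e` models the contraction with the Euler vector field, whose Lie
derivative `d ∘ e + e ∘ d` multiplies an element of ghost number `n` by `n`. -/
theorem boundary_action_exists_unique
    {M : Type*} [AddCommGroup M] [Module ℝ M]
    (d i e : M →ₗ[ℝ] M)
    (hdd : d ∘ₗ d = 0)
    (k : ℝ) (hk : k + 1 ≠ 0)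
    (ω S : M)
    (hω : d ω = 0)
    (L : M →ₗ[ℝ] M) (hL : L = i ∘ₗ d - d ∘ₗ i)
    (hweak : (L ∘ₗ L) ω = 0)
    (α ωb : M) (hα : α = i ω - d S) (hωb : ωb = d α)
    (hgh : (d ∘ₗ e + e ∘ₗ d) (i ωb) = (k + 1) • i ωb)
    (Sb : M) (hSb : Sb = (k + 1)⁻¹ • e (i ωb)) :
    d Sb = i ωb ∧
      ∀ Sb' : M, d Sb' = i ωb → e (Sb - Sb') = 0 →
        (d ∘ₗ e + e ∘ₗ d) (Sb - Sb') = (k + 1) • (Sb - Sb') → Sb' = Sb := by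
  have hdd' (x : M) : d (d x) = 0 := LinearMap.congr_fun hdd x
  have hωb_eq : ωb = d (i ω) := by rw [hωb, hα, map_sub, hdd', sub_zero]
  have hLω : L ω = -ωb := by simp [hL, hω, hωb_eq]
  have hclosed : d (i ωb) = 0 := by
    have hdωb : d ωb = 0 := by rw [hωb, hdd']
    rw [LinearMap.comp_apply, hLω, map_neg, hL] at hweak
    simpa [hdωb] using hweak
  have hexact : d Sb = i ωb := by
    have hde : d (e (i ωb)) = (k + 1) • i ωb := by simpa [hclosed] using hgh
    rw [hSb, map_smul, hde, inv_smul_smul₀ hk]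
  refine ⟨hexact, fun Sb' hSb' he hdeg => ?_⟩
  have hd : d (Sb - Sb') = 0 := by rw [map_sub, hexact, hSb', sub_self]
  have hzero : (k + 1) • (Sb - Sb') = 0 := by
    rw [← hdeg, LinearMap.add_apply, LinearMap.comp_apply, LinearMap.comp_apply, he, hd,
      map_zero, map_zero, add_zero]
  exact (sub_eq_zero.mp ((smul_eq_zero.mp hzero).resolve_left hk)).symm
end

section
/- Let ω, S, S̄, T ∈ M with d ω = 0 and i S = 0, define ᾱ := i ω − d S and ω̄ := d ᾱ, and assume d S̄ = i ω̄ (S̄ is the boundary term) and j ω = − 2 • d T ([Q,Q] is Hamiltonian with (1/2) ι_{[Q,Q]} ω = − δT, the fundamental assumption of boundary-compatible equivariant BV). Then d (L S) = d (2 • S̄ − i ᾱ + 2 • T). (Paper: Lemma δ L_Q S = δ(2 S̄ − ι_Q ᾱ + 2 T).) -/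
/-- Lemma `δ L_Q S = δ(2 S̄ - ι_Q ᾱ + 2 T)`.  Here `d` models `δ`, `i` models
`ι_Q`, `L := i ∘ d - d ∘ i` models `L_Q`, `j := L ∘ i - i ∘ L` models
`ι_{[Q,Q]}`; `ᾱ := ι_Q ω - δ S` and `ω̄ := δ ᾱ`, the boundary term `S̄`
satisfies `δ S̄ = ι_Q ω̄`, and `[Q,Q]` is Hamiltonian: `ι_{[Q,Q]} ω = -2 δ T`. -/
theorem delta_LQ_S
    {M : Type*} [AddCommGroup M] [Module ℝ M]
    (d i : M →ₗ[ℝ] M)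
    (hdd : d ∘ₗ d = 0)
    (ω S Sb T : M)
    (hω : d ω = 0)
    (hiS : i S = 0)
    (L : M →ₗ[ℝ] M) (hL : L = i ∘ₗ d - d ∘ₗ i)
    (j : M →ₗ[ℝ] M) (hj : j = L ∘ₗ i - i ∘ₗ L)
    (α ωb : M) (hα : α = i ω - d S) (hωb : ωb = d α)
    (hSb : d Sb = i ωb)
    (hT : j ω = - (2 : ℝ) • d T) :
    d (L S) = d (2 • Sb - i α + 2 • T) := by
  have hdd' (x : M) : d (d x) = 0 := LinearMap.congr_fun hdd x
  subst hL hj hα hωb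
  simp only [LinearMap.sub_apply, LinearMap.comp_apply, map_sub, hdd', hω, map_zero,
    sub_zero, zero_sub, map_neg] at hSb hT
  simp only [LinearMap.sub_apply, LinearMap.comp_apply, map_sub, map_add, map_nsmul, hiS,
    map_zero, sub_zero, hSb]
  linear_combination (norm := module) -hT
end

section
/- Let k be a real number with k + 1 ≠ 0. Let ω, S, S̄, T ∈ M with d ω = 0 and i S = 0, define ᾱ := i ω − d S and ω̄ := d ᾱ, and assume d S̄ = i ω̄ and j ω = − 2 • d T. Suppose the element g := L S − 2 • S̄ + i ᾱ − 2 • T satisfies e g = 0 and (d ∘ e + e ∘ d)(g) = (k+1) • g (i.e. g is a function of ghost number k + 1). Then L S = 2 • S̄ − i ᾱ + 2 • T. (Paper: Proposition L_Q S = 2 S̄ − ι_Q ᾱ + 2 T for k ≠ −1, the equivariant modified classical master equation.) -/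
/-- Proposition `L_Q S = 2 S̄ - ι_Q ᾱ + 2 T` for `k ≠ -1`: the equivariant
modified classical master equation.  Here `d` models `δ`, `i` models `ι_Q`,
`L := i ∘ d - d ∘ i` models `L_Q`, `j := L ∘ i - i ∘ L` models `ι_{[Q,Q]}`,
and `e` models the contraction with the Euler vector field. -/
theorem equivariant_mCME
    {M : Type*} [AddCommGroup M] [Module ℝ M]
    (d i e : M →ₗ[ℝ] M)
    (hdd : d ∘ₗ d = 0)
    (k : ℝ) (hk : k + 1 ≠ 0)
    (ω S Sb T : M)
    (hω : d ω = 0)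
    (hiS : i S = 0)
    (L : M →ₗ[ℝ] M) (hL : L = i ∘ₗ d - d ∘ₗ i)
    (j : M →ₗ[ℝ] M) (hj : j = L ∘ₗ i - i ∘ₗ L)
    (α ωb : M) (hα : α = i ω - d S) (hωb : ωb = d α)
    (hSb : d Sb = i ωb)
    (hT : j ω = - (2 : ℝ) • d T)
    (g : M) (hg : g = L S - 2 • Sb + i α - 2 • T)
    (hfun : e g = 0)
    (hgh : (d ∘ₗ e + e ∘ₗ d) g = (k + 1) • g) :
    L S = 2 • Sb - i α + 2 • T := by
  have hdd' (x : M) : d (d x) = 0 := LinearMap.congr_fun hdd x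
  have hωb' : ωb = d (i ω) := by
    rw [hωb, hα, map_sub, hdd', sub_zero]
  have hg' : g = i (i ω) - (2 : ℝ) • Sb - (2 : ℝ) • T := by
    simp only [hg, hα, hL, LinearMap.sub_apply, LinearMap.comp_apply, map_sub, hiS, map_zero]
    module
  have hjω : (2 : ℝ) • i (d (i ω)) - d (i (i ω)) = -(2 : ℝ) • d T := by
    rw [← hT]
    simp only [hj, hL, LinearMap.sub_apply, LinearMap.comp_apply, map_sub, hω, map_zero]
    module
  have hdg : d g = 0 := by
    rw [hg', map_sub, map_sub, map_smul, map_smul, hSb, hωb']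
    linear_combination (norm := module) -hjω
  have hg0 : g = 0 := by
    have h : (k + 1) • g = 0 := by
      rw [← hgh]
      simp [hfun, hdg]
    exact (smul_eq_zero.mp h).resolve_left hk
  have h := hg.symm.trans hg0
  rw [← sub_eq_zero, ← h]
  abel
end

section
/- Let ω, S, S̄, T ∈ M with d ω = 0 and i S = 0, define ᾱ := i ω − d S and ω̄ := d ᾱ, and assume d S̄ = i ω̄ and j ω = − 2 • d T. Then d (i (i ω)) = 2 • d (S̄ + T). (Paper: Lemma δ((1/2) ι_Q ι_Q ω) = δ(S̄ + T).) -/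
/-- Lemma `δ((1/2) ι_Q ι_Q ω) = δ(S̄ + T)`.  Here `d` models `δ`, `i` models
`ι_Q`, `L := i ∘ d - d ∘ i` models `L_Q`, `j := L ∘ i - i ∘ L` models
`ι_{[Q,Q]}`; `ᾱ := ι_Q ω - δ S` and `ω̄ := δ ᾱ`, the boundary term `S̄`
satisfies `δ S̄ = ι_Q ω̄`, and `[Q,Q]` is Hamiltonian: `ι_{[Q,Q]} ω = -2 δ T`. -/
theorem delta_iQ_iQ_omega
    {M : Type*} [AddCommGroup M] [Module ℝ M]
    (d i : M →ₗ[ℝ] M)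
    (hdd : d ∘ₗ d = 0)
    (ω S Sb T : M)
    (hω : d ω = 0)
    (hiS : i S = 0)
    (L : M →ₗ[ℝ] M) (hL : L = i ∘ₗ d - d ∘ₗ i)
    (j : M →ₗ[ℝ] M) (hj : j = L ∘ₗ i - i ∘ₗ L)
    (α ωb : M) (hα : α = i ω - d S) (hωb : ωb = d α)
    (hSb : d Sb = i ωb)
    (hT : j ω = - (2 : ℝ) • d T) :
    d (i (i ω)) = 2 • d (Sb + T) := by
  have hddS : d (d S) = 0 := LinearMap.congr_fun hdd S
  have hidi : d Sb = i (d (i ω)) := by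
    rw [hSb, hωb, hα, map_sub, hddS, sub_zero]
  have hjω : j ω = d Sb - d (i (i ω)) + d Sb := by
    simp [hj, hL, hω, hidi]
  rw [hT] at hjω
  have hsolve : d (i (i ω)) = d Sb + d Sb - (-(2 : ℝ) • d T) := by
    rw [hjω]; abel
  rw [hsolve, map_add]
  module
end

section
/- Let k be a real number with k + 1 ≠ 0. Let ω, S, S̄, T ∈ M with d ω = 0 and i S = 0, define ᾱ := i ω − d S and ω̄ := d ᾱ, and assume d S̄ = i ω̄ and j ω = − 2 • d T. Suppose the element g := (1/2) • i (i ω) − S̄ − T satisfies e g = 0 and (d ∘ e + e ∘ d)(g) = (k+1) • g (i.e. g is a function of ghost number k + 1). Then (1/2) • i (i ω) = S̄ + T; equivalently (1/2) ι_Q ι_Q ω − T = S̄, exhibiting the boundary term S̄ as the modification of the equivariant CME (1/2) ι_Q ι_Q ω = T. (Paper: Theorem (1/2) ι_Q ι_Q ω = S̄ + T for k ≠ −1.) -/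
/-- Theorem `(1/2) ι_Q ι_Q ω = S̄ + T` for `k ≠ -1`: the boundary term `S̄` is
the modification of the equivariant CME `(1/2) ι_Q ι_Q ω = T`.  Here `d` models
`δ`, `i` models `ι_Q`, `L := i ∘ d - d ∘ i` models `L_Q`,
`j := L ∘ i - i ∘ L` models `ι_{[Q,Q]}`, and `e` models the contraction with
the Euler vector field. -/
theorem half_iQ_iQ_omega_eq
    {M : Type*} [AddCommGroup M] [Module ℝ M]
    (d i e : M →ₗ[ℝ] M)
    (hdd : d ∘ₗ d = 0)
    (k : ℝ) (hk : k + 1 ≠ 0)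
    (ω S Sb T : M)
    (hω : d ω = 0)
    (hiS : i S = 0)
    (L : M →ₗ[ℝ] M) (hL : L = i ∘ₗ d - d ∘ₗ i)
    (j : M →ₗ[ℝ] M) (hj : j = L ∘ₗ i - i ∘ₗ L)
    (α ωb : M) (hα : α = i ω - d S) (hωb : ωb = d α)
    (hSb : d Sb = i ωb)
    (hT : j ω = - (2 : ℝ) • d T)
    (g : M) (hg : g = (1 / 2 : ℝ) • i (i ω) - Sb - T)
    (hfun : e g = 0)
    (hgh : (d ∘ₗ e + e ∘ₗ d) g = (k + 1) • g) :
    (1 / 2 : ℝ) • i (i ω) = Sb + T := by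
  have hdS : d (d S) = 0 := LinearMap.congr_fun hdd S
  have hSb' : d Sb = i (d (i ω)) := by
    rw [hSb, hωb, hα, map_sub, hdS, sub_zero]
  have hjω : j ω = (2 : ℝ) • i (d (i ω)) - d (i (i ω)) := by
    simp only [hj, hL, LinearMap.sub_apply, LinearMap.comp_apply, hω, map_zero, map_sub]
    module
  have hdg : d g = 0 := by
    rw [hjω] at hT
    rw [hg, map_sub, map_sub, map_smul, hSb']
    linear_combination (norm := module) (-(1 / 2) : ℝ) • hT
  have hg0 : g = 0 := by
    have hkg : (k + 1) • g = 0 := by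
      rw [← hgh]
      simp [hfun, hdg]
    exact (smul_eq_zero.mp hkg).resolve_left hk
  rw [hg, sub_sub] at hg0
  exact sub_eq_zero.mp hg0
end

section
/- Let ω, S, S̄, T ∈ M with d ω = 0, i S = 0, i S̄ = 0 and i T = 0, define ᾱ := i ω − d S and ω̄ := d ᾱ, and assume: d S̄ = i ω̄; j ω = − 2 • d T; i ∘ j = j ∘ i (modeling the vanishing of the bracket [ι_Q, ι_{[Q,Q]}] = ι_{[Q,[Q,Q]]} = 0); and i (i ω) = 2 • (S̄ + T). Then L S̄ = − 2 • L T, i.e. (1/2) L_Q S̄ = − L_Q T. (Paper: Proposition (1/2) L_Q S̄ = − L_Q T.) -/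
/-- Proposition `(1/2) L_Q S̄ = - L_Q T`, i.e. `L_Q S̄ = -2 L_Q T`.  Here `d`
models `δ`, `i` models `ι_Q`, `L := i ∘ d - d ∘ i` models `L_Q`,
`j := L ∘ i - i ∘ L` models `ι_{[Q,Q]}`; `ᾱ := ι_Q ω - δ S`, `ω̄ := δ ᾱ`,
`δ S̄ = ι_Q ω̄`, `ι_{[Q,Q]} ω = -2 δ T`, `[ι_Q, ι_{[Q,Q]}] = 0`, and
`ι_Q ι_Q ω = 2 (S̄ + T)`. -/
theorem half_LQ_Sb_eq_neg_LQ_T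
    {M : Type*} [AddCommGroup M] [Module ℝ M]
    (d i : M →ₗ[ℝ] M)
    (hdd : d ∘ₗ d = 0)
    (ω S Sb T : M)
    (hω : d ω = 0)
    (hiS : i S = 0)
    (hiSb : i Sb = 0)
    (hiT : i T = 0)
    (L : M →ₗ[ℝ] M) (hL : L = i ∘ₗ d - d ∘ₗ i)
    (j : M →ₗ[ℝ] M) (hj : j = L ∘ₗ i - i ∘ₗ L)
    (α ωb : M) (hα : α = i ω - d S) (hωb : ωb = d α)
    (hSb : d Sb = i ωb)
    (hT : j ω = - (2 : ℝ) • d T)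
    (hcomm : i ∘ₗ j = j ∘ₗ i)
    (hCME : i (i ω) = (2 : ℝ) • (Sb + T)) :
    L Sb = - (2 : ℝ) • L T := by
  have hdd_apply : ∀ x, d (d x) = 0 := fun x => LinearMap.congr_fun hdd x
  have hidi : i (d (i ω)) = d Sb := by
    rw [hSb, hωb, hα, map_sub, hdd_apply, sub_zero]
  have hiii : i (i (i ω)) = 0 := by
    rw [hCME, map_smul, map_add, hiSb, hiT, add_zero, smul_zero]
  have hcomm_ω : i (j ω) = j (i ω) := LinearMap.congr_fun hcomm ω
  have hjiω : j (i ω) = (3 : ℝ) • i (d Sb) + (4 : ℝ) • i (d T) := by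
    simp only [hj, hL, LinearMap.sub_apply, LinearMap.comp_apply, map_sub, hiii, hidi, map_zero]
    rw [hCME]
    simp only [map_smul, map_add]
    module
  rw [hT, hjiω, map_smul] at hcomm_ω
  have hidSb : i (d Sb) = -(2 : ℝ) • i (d T) := by
    linear_combination (norm := module) (-(1 / 3) : ℝ) • hcomm_ω
  simpa [hL, hiSb, hiT] using hidSb
end

section
/- Let ω̄, S̄, T ∈ M and assume L ω̄ = 0, d S̄ = i ω̄, and L S̄ = − 2 • L T. Define T̄ := − L T. Then (1/2) • j ω̄ = − d T̄, i.e. (1/2) ι_{[Q,Q]} ω̄ = − δ T̄, the pre-boundary version of the equivariant master equation. (Paper: Lemma (1/2) ι_{[Q,Q]} ω̄ = − δ T̄, where T̄ := − L_Q T satisfies the boundary BFV equivariant CME (1/2) L_Q S̄ = T̄.) -/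
/-- With the sign convention `L = i ∘ d - d ∘ i`, the Lie derivative anticommutes with `d`. -/
theorem lieDerivative_differential_anticomm
    {R M : Type*} [Ring R] [AddCommGroup M] [Module R M]
    (d i : M →ₗ[R] M) (hdd : d ∘ₗ d = 0) (x : M) :
    (i ∘ₗ d - d ∘ₗ i) (d x) = - d ((i ∘ₗ d - d ∘ₗ i) x) := by
  have hd (y : M) : d (d y) = 0 := LinearMap.congr_fun hdd y
  simp [hd]

/-- Lemma `(1/2) ι_{[Q,Q]} ω̄ = - δ T̄`, the pre-boundary version of the
equivariant master equation, with `T̄ := - L_Q T`.  Here `d` models `δ`, `i`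
models `ι_Q`, `L := i ∘ d - d ∘ i` models `L_Q`, and `j := L ∘ i - i ∘ L`
models `ι_{[Q,Q]}`. -/
theorem preboundary_equivariant_master_equation
    {M : Type*} [AddCommGroup M] [Module ℝ M]
    (d i : M →ₗ[ℝ] M)
    (hdd : d ∘ₗ d = 0)
    (L : M →ₗ[ℝ] M) (hL : L = i ∘ₗ d - d ∘ₗ i)
    (j : M →ₗ[ℝ] M) (hj : j = L ∘ₗ i - i ∘ₗ L)
    (ωb Sb T : M)
    (hLωb : L ωb = 0)
    (hSb : d Sb = i ωb)
    (hLSb : L Sb = - (2 : ℝ) • L T)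
    (Tb : M) (hTb : Tb = - L T) :
    (1 / 2 : ℝ) • j ωb = - d Tb := by
  have hj_apply : j ωb = - d (L Sb) := by
    calc j ωb = L (i ωb) := by simp [hj, hLωb]
      _ = L (d Sb) := by rw [hSb]
      _ = - d (L Sb) := by
        rw [hL]
        exact lieDerivative_differential_anticomm d i hdd Sb
  rw [hj_apply, hLSb, hTb, map_smul, map_neg]
  module
end

section
/- Let ω, S, A, B ∈ M with d ω = 0 and i S = 0. Assume: L ∘ i = i ∘ L (i.e. j = ι_{[Q,Q]} = 0, modeling that Q is cohomological, Q² = 0); i ω = d S + A (the BV-BFV relation ι_Q ω = δS + π*α^∂ with A modeling the pulled-back boundary one-form π*α^∂); and d B = i (d A) (B models π*S^∂, via the BFV relation δ S^∂ = ι_{Q^∂} ω^∂ pulled back along π). Suppose moreover that the element g := L S − 2 • B + i A satisfies e g = 0 and (d ∘ e + e ∘ d)(g) = g (g is a function of ghost number 1). Then L S = 2 • B − i A, the modified classical master equation L_Q S = π*(2 S^∂ − ι_{Q^∂} α^∂): the classical master equation is violated only by boundary terms. (Paper: equation (mCME), proved in Section 2.) -/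
/-- The modified classical master equation
`L_Q S = π*(2 S^∂ - ι_{Q^∂} α^∂)`: the classical master equation is violated
only by boundary terms.  Here `d` models `δ`, `i` models `ι_Q`,
`L := i ∘ d - d ∘ i` models `L_Q`, `Q` is cohomological (`L ∘ i = i ∘ L`,
i.e. `ι_{[Q,Q]} = 0`), `A` models the pulled-back boundary one-form
`π* α^∂` in `ι_Q ω = δ S + π* α^∂`, `B` models `π* S^∂` via
`δ B = ι_Q (δ A)`, and `e` models the contraction with the Euler vector
field. -/
theorem modified_CME
    {M : Type*} [AddCommGroup M] [Module ℝ M]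
    (d i e : M →ₗ[ℝ] M)
    (hdd : d ∘ₗ d = 0)
    (ω S A B : M)
    (hω : d ω = 0)
    (hiS : i S = 0)
    (L : M →ₗ[ℝ] M) (hL : L = i ∘ₗ d - d ∘ₗ i)
    (hcoh : L ∘ₗ i = i ∘ₗ L)
    (hBVBFV : i ω = d S + A)
    (hB : d B = i (d A))
    (g : M) (hg : g = L S - 2 • B + i A)
    (hfun : e g = 0)
    (hgh : (d ∘ₗ e + e ∘ₗ d) g = g) :
    L S = 2 • B - i A := by
  subst hL
  have hdd' : ∀ x, d (d x) = 0 := fun x => LinearMap.congr_fun hdd x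
  have key : d (i (d S)) + d (i A) = 2 • i (d A) := by
    have h := LinearMap.congr_fun hcoh ω
    simp only [LinearMap.comp_apply, LinearMap.sub_apply, hω, hBVBFV, map_add, map_neg,
      map_zero, hdd', zero_add, zero_sub] at h
    rw [two_nsmul, ← sub_eq_zero, ← neg_eq_zero, ← sub_eq_zero.mpr h]
    abel
  have hdg : d g = 0 := by
    simp only [hg, LinearMap.sub_apply, LinearMap.comp_apply, hiS, map_zero, sub_zero, map_add,
      map_sub, map_nsmul, hB]
    rw [← key]
    abel
  have hg0 : g = 0 := by
    simpa [hfun, hdg] using hgh.symm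
  rw [← sub_eq_zero, ← hg0, hg]
  abel
end

section
/- Let ω, S, A, B ∈ M with d ω = 0 and i S = 0. Assume: L ∘ i = i ∘ L (i.e. j = ι_{[Q,Q]} = 0, modeling that Q is cohomological, Q² = 0); i ω = d S + A (the BV-BFV relation ι_Q ω = δS + π*α^∂ with A modeling the pulled-back boundary one-form π*α^∂); and d B = i (d A) (B models π*S^∂, via the BFV relation δ S^∂ = ι_{Q^∂} ω^∂ pulled back along π). Suppose moreover that the element g' := (1/2) • i (i ω) − B satisfies e g' = 0 and (d ∘ e + e ∘ d)(g') = g' (g' is a function of ghost number 1). Then (1/2) • i (i ω) = B, i.e. (1/2) ι_Q ι_Q ω = π* S^∂. (Paper: equation (e:mCME2), proved in Section 2.) -/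
/-- The relation `(1/2) ι_Q ι_Q ω = π* S^∂`.  Here `d` models `δ`, `i` models
`ι_Q`, `L := i ∘ d - d ∘ i` models `L_Q`, `Q` is cohomological
(`L ∘ i = i ∘ L`, i.e. `ι_{[Q,Q]} = 0`), `A` models the pulled-back boundary
one-form `π* α^∂` in `ι_Q ω = δ S + π* α^∂`, `B` models `π* S^∂` via
`δ B = ι_Q (δ A)`, and `e` models the contraction with the Euler vector
field. -/
theorem half_iQ_iQ_omega_boundary
    {M : Type*} [AddCommGroup M] [Module ℝ M]
    (d i e : M →ₗ[ℝ] M)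
    (hdd : d ∘ₗ d = 0)
    (ω S A B : M)
    (hω : d ω = 0)
    (hiS : i S = 0)
    (L : M →ₗ[ℝ] M) (hL : L = i ∘ₗ d - d ∘ₗ i)
    (hcoh : L ∘ₗ i = i ∘ₗ L)
    (hBVBFV : i ω = d S + A)
    (hB : d B = i (d A))
    (g' : M) (hg' : g' = (1 / 2 : ℝ) • i (i ω) - B)
    (hfun : e g' = 0)
    (hgh : (d ∘ₗ e + e ∘ₗ d) g' = g') :
    (1 / 2 : ℝ) • i (i ω) = B := by
  have hdiω : d (i ω) = d A := by
    rw [hBVBFV, map_add, ← LinearMap.comp_apply, hdd, LinearMap.zero_apply, zero_add]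
  have hdii : d (i (i ω)) = (2 : ℝ) • i (d A) := by
    have h := LinearMap.congr_fun hcoh ω
    simp only [hL, LinearMap.comp_apply, LinearMap.sub_apply, hω, map_zero, zero_sub, map_neg,
      hdiω] at h
    rw [two_smul, ← sub_eq_iff_eq_add, ← neg_sub, h, neg_neg]
  have hdg : d g' = 0 := by
    rw [hg', map_sub, map_smul, hdii, hB, smul_smul]
    norm_num
  have hg0 : g' = 0 := by
    rw [← hgh, LinearMap.add_apply, LinearMap.comp_apply, LinearMap.comp_apply, hfun, hdg,
      map_zero, map_zero, add_zero]
  exact sub_eq_zero.mp (hg'.symm.trans hg0)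
end
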